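/- arXiv:2303.09017 — 6 statements merged into one kernel-verified Lean document; each statement's English description precedes it below -/
import Mathlib

section
/- Let Y be a finite nonempty set and (J y)_{y∈Y} finite nonempty sets, and let V, U ⊆ E be linear subspaces. If CCPD(V) ⊆ CCPD(U), then QNCCPD(V) ⊆ QNCCPD(U). -/
/-- The set of conditional probability distributions on the disjoint union `Σ y, J y`. -/
def condDist (Y : Type) [Fintype Y] (J : Y → Type) [∀ y, Fintype (J y)] :
    Set ((Σ y : Y, J y) → ℝ) :=
  {x | (∀ p : Σ y : Y, J y, 0 ≤ x p) ∧ ∀ y : Y, ∑ j : J y, x ⟨y, j⟩ = 1}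

/-- The set of quasi-normalised vectors: components in `[0,1]` and all row sums equal. -/
def quasiNorm (Y : Type) [Fintype Y] (J : Y → Type) [∀ y, Fintype (J y)] :
    Set ((Σ y : Y, J y) → ℝ) :=
  {x | (∀ p : Σ y : Y, J y, 0 ≤ x p ∧ x p ≤ 1) ∧
    ∀ y y' : Y, ∑ j : J y, x ⟨y, j⟩ = ∑ j : J y', x ⟨y', j⟩}

/-! A nonzero quasi-normalised vector has a positive common row sum, and dividing by it yields a
conditional probability distribution on the same ray. Hence `QNCCPD(V)` lies in the cone generated
by `CCPD(V)`. -/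

theorem exists_sum_fiber_pos_of_nonneg_of_ne_zero {ι M : Type*} {κ : ι → Type*}
    [∀ i, Fintype (κ i)] [AddCommMonoid M] [PartialOrder M] [IsOrderedCancelAddMonoid M]
    {x : (Σ i, κ i) → M} (hx : 0 ≤ x) (hx0 : x ≠ 0) : ∃ i, 0 < ∑ k : κ i, x ⟨i, k⟩ := by
  obtain ⟨⟨i, k⟩, hk⟩ := Function.ne_iff.1 hx0
  exact ⟨i, Finset.sum_pos' (fun l _ => hx ⟨i, l⟩)
    ⟨k, Finset.mem_univ k, (hx ⟨i, k⟩).lt_of_ne' hk⟩⟩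

section

variable {Y : Type} [Fintype Y] {J : Y → Type} [∀ y, Fintype (J y)] {x : (Σ y : Y, J y) → ℝ}

theorem inv_smul_mem_condDist (hx : 0 ≤ x) {s : ℝ} (hs : 0 < s)
    (hsum : ∀ y : Y, ∑ j : J y, x ⟨y, j⟩ = s) : s⁻¹ • x ∈ condDist Y J := by
  refine ⟨smul_nonneg (inv_nonneg.2 hs.le) hx, fun y => ?_⟩
  calc ∑ j : J y, (s⁻¹ • x) ⟨y, j⟩
      = s⁻¹ * ∑ j : J y, x ⟨y, j⟩ := (Finset.mul_sum ..).symm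
    _ = 1 := by rw [hsum y, inv_mul_cancel₀ hs.ne']

theorem inter_quasiNorm_subset_hull_inter_condDist (V : PointedCone ℝ ((Σ y : Y, J y) → ℝ)) :
    (V : Set ((Σ y : Y, J y) → ℝ)) ∩ quasiNorm Y J
      ⊆ PointedCone.hull ℝ ((V : Set ((Σ y : Y, J y) → ℝ)) ∩ condDist Y J) := by
  rintro x ⟨hxV, hx01, hsum⟩
  rcases eq_or_ne x 0 with rfl | hx0
  · exact zero_mem _
  · have hx : 0 ≤ x := fun p => (hx01 p).1
    obtain ⟨y₀, hs⟩ := exists_sum_fiber_pos_of_nonneg_of_ne_zero hx hx0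
    set s := ∑ j : J y₀, x ⟨y₀, j⟩
    have hmem : s⁻¹ • x ∈ (V : Set ((Σ y : Y, J y) → ℝ)) ∩ condDist Y J :=
      ⟨V.smul_mem (inv_nonneg.2 hs.le) hxV, inv_smul_mem_condDist hx hs fun y => hsum y y₀⟩
    rw [← smul_inv_smul₀ hs.ne' x]
    exact PointedCone.smul_mem _ hs.le (PointedCone.subset_hull hmem)

end

theorem qnccpd_subset_of_ccpd_subset_general
    (Y : Type) [Fintype Y] (J : Y → Type) [∀ y, Fintype (J y)]
    (V U : PointedCone ℝ ((Σ y : Y, J y) → ℝ))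
    (h : (V : Set ((Σ y : Y, J y) → ℝ)) ∩ condDist Y J
        ⊆ (U : Set ((Σ y : Y, J y) → ℝ)) ∩ condDist Y J) :
    (V : Set ((Σ y : Y, J y) → ℝ)) ∩ quasiNorm Y J
      ⊆ (U : Set ((Σ y : Y, J y) → ℝ)) ∩ quasiNorm Y J := by
  have hull_le : PointedCone.hull ℝ ((V : Set ((Σ y : Y, J y) → ℝ)) ∩ condDist Y J) ≤ U :=
    Submodule.span_le.2 (h.trans Set.inter_subset_left)
  exact Set.subset_inter
    ((inter_quasiNorm_subset_hull_inter_condDist V).trans hull_le) Set.inter_subset_right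

/-- If `CCPD(V) ⊆ CCPD(U)` then `QNCCPD(V) ⊆ QNCCPD(U)`. -/
theorem qnccpd_subset_of_ccpd_subset
    (Y : Type) [Fintype Y] [Nonempty Y]
    (J : Y → Type) [∀ y, Fintype (J y)] [∀ y, Nonempty (J y)]
    (V U : Submodule ℝ ((Σ y : Y, J y) → ℝ))
    (h : (V : Set ((Σ y : Y, J y) → ℝ)) ∩ condDist Y J
        ⊆ (U : Set ((Σ y : Y, J y) → ℝ)) ∩ condDist Y J) :
    (V : Set ((Σ y : Y, J y) → ℝ)) ∩ quasiNorm Y J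
      ⊆ (U : Set ((Σ y : Y, J y) → ℝ)) ∩ quasiNorm Y J :=
  qnccpd_subset_of_ccpd_subset_general Y J (V : PointedCone ℝ _) (U : PointedCone ℝ _) h
end

section
/- Let Y be a finite nonempty set and (J y)_{y∈Y} finite nonempty sets, and let V, U ⊆ E be linear subspaces with CCPD(V) ⊆ CCPD(U). If u ∈ CCPD(U) and v ∈ QNCCPD(V) satisfies v ≤ u componentwise, then u − v ∈ QNCCPD(U); moreover, if the mass m of v satisfies m < 1, then (1 − m)⁻¹ • (u − v) ∈ CCPD(U). -/
/-!
Normalising a nonzero `v` of mass `m` gives `m⁻¹ • v ∈ CCPD(V) ⊆ U`, so `v ∈ U` after scaling back;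
a nonnegative vector of mass `0` vanishes. Hence `u - v` is a vector of `U` lying between `0` and
`u`, with mass `1 - m`.
-/

/-- `HasMass x m` says that `x` is nonnegative and that all its row sums are equal to `m`, the mass
of `x`. Thus conditional probability distributions are the vectors of mass `1`. If there are no
rows, every `m` is a mass of `x`. -/
structure HasMass {ι : Type*} {κ : ι → Type*} [∀ i, Fintype (κ i)] {R : Type*}
    [AddCommMonoid R] [LE R] (x : (Σ i, κ i) → R) (m : R) : Prop where
  nonneg : 0 ≤ x
  sum_eq : ∀ i, ∑ j, x ⟨i, j⟩ = m

namespace HasMass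

section Ordered

variable {ι : Type*} {κ : ι → Type*} [∀ i, Fintype (κ i)] {R : Type*} [PartialOrder R]

theorem apply_le [AddCommMonoid R] [IsOrderedAddMonoid R] {x : (Σ i, κ i) → R} {m : R}
    (hx : HasMass x m) (p : Σ i, κ i) : x p ≤ m :=
  calc
    x p ≤ ∑ j, x ⟨p.1, j⟩ :=
      Finset.single_le_sum (f := fun j ↦ x ⟨p.1, j⟩) (fun j _ ↦ hx.nonneg ⟨p.1, j⟩)
        (Finset.mem_univ p.2)
    _ = m := hx.sum_eq p.1

theorem eq_zero_of_nonpos [AddCommMonoid R] [IsOrderedAddMonoid R] {x : (Σ i, κ i) → R} {m : R}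
    (hx : HasMass x m) (hm : m ≤ 0) : x = 0 :=
  le_antisymm (fun p ↦ (hx.apply_le p).trans hm) hx.nonneg

theorem sub [AddCommGroup R] [IsOrderedAddMonoid R] {x y : (Σ i, κ i) → R} {a b : R}
    (hx : HasMass x a) (hy : HasMass y b) (hyx : y ≤ x) : HasMass (x - y) (a - b) where
  nonneg := sub_nonneg.2 hyx
  sum_eq i := by simp only [Pi.sub_apply, Finset.sum_sub_distrib, hx.sum_eq, hy.sum_eq]

theorem smul [Semiring R] [IsOrderedRing R] {x : (Σ i, κ i) → R} {m c : R}
    (hx : HasMass x m) (hc : 0 ≤ c) : HasMass (c • x) (c * m) where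
  nonneg := smul_nonneg hc hx.nonneg
  sum_eq i := by simp only [Pi.smul_apply, smul_eq_mul, ← Finset.mul_sum, hx.sum_eq]

end Ordered

theorem inv_smul {ι : Type*} {κ : ι → Type*} [∀ i, Fintype (κ i)] {K : Type*} [Field K]
    [LinearOrder K] [IsStrictOrderedRing K] {x : (Σ i, κ i) → K} {m : K}
    (hx : HasMass x m) (hm : 0 < m) : HasMass (m⁻¹ • x) 1 :=
  inv_mul_cancel₀ hm.ne' ▸ hx.smul (inv_nonneg.2 hm.le)

end HasMass

section CondDist

variable {Y : Type} [Fintype Y] {J : Y → Type} [∀ y, Fintype (J y)] {x u : (Σ y, J y) → ℝ} {m : ℝ}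

theorem mem_condDist_iff_hasMass_one : x ∈ condDist Y J ↔ HasMass x 1 :=
  ⟨fun h ↦ ⟨h.1, h.2⟩, fun h ↦ ⟨h.nonneg, h.sum_eq⟩⟩

theorem HasMass.mem_quasiNorm_of_le (hx : HasMass x m) (hu : u ∈ condDist Y J) (hxu : x ≤ u) :
    x ∈ quasiNorm Y J :=
  ⟨fun p ↦ ⟨hx.nonneg p, (hxu p).trans ((mem_condDist_iff_hasMass_one.1 hu).apply_le p)⟩,
    fun y y' ↦ (hx.sum_eq y).trans (hx.sum_eq y').symm⟩

theorem HasMass.mem_of_inter_condDist_subset {V : Set ((Σ y, J y) → ℝ)}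
    {U : Submodule ℝ ((Σ y, J y) → ℝ)} (hV : ∀ c : ℝ, 0 < c → ∀ x ∈ V, c • x ∈ V)
    (hVU : V ∩ condDist Y J ⊆ U) (hx : HasMass x m) (hxV : x ∈ V) : x ∈ U := by
  rcases le_or_gt m 0 with hm | hm
  · exact hx.eq_zero_of_nonpos hm ▸ U.zero_mem
  · have normalized_mem : m⁻¹ • x ∈ U :=
      hVU ⟨hV _ (inv_pos.2 hm) x hxV, mem_condDist_iff_hasMass_one.2 (hx.inv_smul hm)⟩
    exact (U.smul_mem_iff (inv_ne_zero hm.ne')).1 normalized_mem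

end CondDist

theorem difference_in_super_polytope_general {Y : Type} [Fintype Y] {J : Y → Type}
    [∀ y, Fintype (J y)] {V : Set ((Σ y, J y) → ℝ)} {U : Submodule ℝ ((Σ y, J y) → ℝ)}
    (hV : ∀ c : ℝ, 0 < c → ∀ x ∈ V, c • x ∈ V) (hVU : V ∩ condDist Y J ⊆ U)
    {u v : (Σ y, J y) → ℝ} (hu : u ∈ (U : Set ((Σ y, J y) → ℝ)) ∩ condDist Y J)
    (hvV : v ∈ V) {m : ℝ} (hv : HasMass v m) (hle : v ≤ u) :
    u - v ∈ (U : Set ((Σ y, J y) → ℝ)) ∩ quasiNorm Y J ∧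
    (m < 1 → (1 - m)⁻¹ • (u - v) ∈ (U : Set ((Σ y, J y) → ℝ)) ∩ condDist Y J) := by
  obtain ⟨huU, huD⟩ := hu
  have hdU : u - v ∈ U := U.sub_mem huU (hv.mem_of_inter_condDist_subset hV hVU hvV)
  have hd : HasMass (u - v) (1 - m) := (mem_condDist_iff_hasMass_one.1 huD).sub hv hle
  refine ⟨⟨hdU, hd.mem_quasiNorm_of_le huD (sub_le_self u hv.nonneg)⟩, fun hm ↦ ?_⟩
  exact ⟨U.smul_mem _ hdU, mem_condDist_iff_hasMass_one.2 (hd.inv_smul (sub_pos.2 hm))⟩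

/-- If `CCPD(V) ⊆ CCPD(U)`, `u ∈ CCPD(U)` and `v ∈ QNCCPD(V)` with `v ≤ u`
componentwise, then `u - v ∈ QNCCPD(U)`; moreover, if the mass `m` of `v` satisfies
`m < 1`, then `(1 - m)⁻¹ • (u - v) ∈ CCPD(U)`. -/
theorem difference_in_super_polytope
    (Y : Type) [Fintype Y] [Nonempty Y]
    (J : Y → Type) [∀ y, Fintype (J y)] [∀ y, Nonempty (J y)]
    (V U : Submodule ℝ ((Σ y : Y, J y) → ℝ))
    (hVU : (V : Set ((Σ y : Y, J y) → ℝ)) ∩ condDist Y J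
        ⊆ (U : Set ((Σ y : Y, J y) → ℝ)) ∩ condDist Y J)
    (u v : (Σ y : Y, J y) → ℝ)
    (hu : u ∈ (U : Set ((Σ y : Y, J y) → ℝ)) ∩ condDist Y J)
    (hv : v ∈ (V : Set ((Σ y : Y, J y) → ℝ)) ∩ quasiNorm Y J)
    (hle : v ≤ u)
    (m : ℝ) (hm : ∀ y : Y, ∑ j : J y, v ⟨y, j⟩ = m) :
    u - v ∈ (U : Set ((Σ y : Y, J y) → ℝ)) ∩ quasiNorm Y J ∧
    (m < 1 → (1 - m)⁻¹ • (u - v) ∈ (U : Set ((Σ y : Y, J y) → ℝ)) ∩ condDist Y J) := by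
  exact difference_in_super_polytope_general (fun c _ _ ↦ V.smul_mem c)
    (hVU.trans Set.inter_subset_left) hu hv.1 ⟨fun p ↦ (hv.2.1 p).1, hm⟩ hle
end

section
/- The no-signalling polytope on three parties with binary inputs and binary outputs — the set of all three-party empirical models p : ({0,1}³) → ({0,1}³ → ℝ) satisfying the no-signalling equations — has affine dimension 26; that is, the rank over ℝ of the vector span of the differences of its elements equals 26. -/
/-- The no-signalling polytope on three parties `A, B, C` with binary inputs and binary
outputs: empirical models `p` (nonnegative, normalised) such that for each party the
corresponding output-marginal is unchanged when that party's input is varied. -/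
def noSignalling3 : Set ((Bool × Bool × Bool) → (Bool × Bool × Bool) → ℝ) :=
  {p | (∀ i o, 0 ≤ p i o) ∧ (∀ i, ∑ o : Bool × Bool × Bool, p i o = 1) ∧
    (∀ a a' b c y z : Bool,
      ∑ x : Bool, p (a, b, c) (x, y, z) = ∑ x : Bool, p (a', b, c) (x, y, z)) ∧
    (∀ a b b' c x z : Bool,
      ∑ y : Bool, p (a, b, c) (x, y, z) = ∑ y : Bool, p (a, b', c) (x, y, z)) ∧
    (∀ a b c c' x y : Bool,
      ∑ z : Bool, p (a, b, c) (x, y, z) = ∑ z : Bool, p (a, b, c') (x, y, z))}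

/-!
The uniform model is strictly positive, so near it the inequalities `0 ≤ p i o` are inactive and
the polytope spans the whole affine space cut out by its equations. The no-signalling equations
say, one party at a time, that an output marginal does not depend on the input. Currying a
no-signalling family as a function of the first party's input and output, then of the second's,
then of the third's, therefore reduces the count to one party with values in an arbitrary space
`E`: a family `I → O → E` with constant marginal is its marginal together with `|I|` elements of
the kernel of summation over `O`, so each party multiplies the dimension by
`|I| (|O| - 1) + 1`. Normalisation is one further equation, because the total mass of a
no-signalling family does not depend on the inputs.
-/

open Module Topology

theorem vectorSpan_inter_eq_direction_of_mem_nhds {𝕜 V : Type*} [NontriviallyNormedField 𝕜]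
    [AddCommGroup V] [Module 𝕜 V] [TopologicalSpace V] [ContinuousAdd V] [ContinuousSMul 𝕜 V]
    {Q : AffineSubspace 𝕜 V} {s : Set V} {u : V} (hu : u ∈ Q) (hs : s ∈ 𝓝 u) :
    vectorSpan 𝕜 (Q ∩ s : Set V) = Q.direction := by
  refine le_antisymm (vectorSpan_mono 𝕜 Set.inter_subset_left) fun d hd ↦ ?_
  have hlim : Filter.Tendsto (fun t : 𝕜 ↦ t • d + u) (𝓝[≠] 0) (𝓝 u) := by
    have : Continuous fun t : 𝕜 ↦ t • d + u := by fun_prop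
    simpa using (this.tendsto 0).mono_left nhdsWithin_le_nhds
  obtain ⟨t, hts, ht⟩ := ((hlim.eventually_mem hs).and self_mem_nhdsWithin).exists
  have htQ : t • d + u ∈ Q :=
    AffineSubspace.vadd_mem_of_mem_direction (Q.direction.smul_mem t hd) hu
  have hmem : t • d ∈ vectorSpan 𝕜 (Q ∩ s : Set V) := by
    simpa using vsub_mem_vectorSpan 𝕜 (Set.mem_inter htQ hts)
      (Set.mem_inter hu (mem_of_mem_nhds hs))
  exact (Submodule.smul_mem_iff _ ht).1 hmem

theorem finrank_inf_ker_add_one {K V : Type*} [Field K] [AddCommGroup V] [Module K V]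
    {S : Submodule K V} [FiniteDimensional K S] {f : V →ₗ[K] K} {u : V} (hu : u ∈ S)
    (hfu : f u ≠ 0) : finrank K ↥(S ⊓ f.ker) + 1 = finrank K S := by
  have hf : f.domRestrict S ≠ 0 := fun h ↦ hfu (LinearMap.congr_fun h ⟨u, hu⟩)
  rw [← Module.Dual.finrank_ker_add_one_of_ne_zero hf, LinearMap.ker_domRestrict,
    ← Submodule.finrank_map_subtype_eq, Submodule.map_comap_subtype]

section OneParty

variable (K I O E : Type*) [Fintype O]

section Ring

variable [Ring K] [AddCommGroup E] [Module K E]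

/-- Summation over the outputs of one party. -/
def sumOutputs : (O → E) →ₗ[K] E :=
  ∑ o, LinearMap.proj o

/-- The one-party no-signalling space with values in `E`: families, indexed by an input in `I` and
an output in `O`, whose marginal over the outputs is the same for all inputs. The values lie in a
module so that the remaining parties can be absorbed into `E`. -/
def constMarginal : Submodule K (I → O → E) where
  carrier := {w | ∀ i i', ∑ o, w i o = ∑ o, w i' o}
  zero_mem' _ _ := rfl
  add_mem' hv hw i i' := by
    simp only [Pi.add_apply, Finset.sum_add_distrib, hv i i', hw i i']
  smul_mem' r w hw i i' := by
    simp only [Pi.smul_apply, ← Finset.smul_sum, hw i i']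

variable {K I O E}

@[simp]
theorem sumOutputs_apply (v : O → E) : sumOutputs K O E v = ∑ o, v o := by
  simp [sumOutputs]

theorem sum_coe_ker_sumOutputs (v : (sumOutputs K O E).ker) : ∑ o, v.1 o = 0 :=
  (sumOutputs_apply v.1).symm.trans v.2

theorem sumOutputs_surjective [Nonempty O] : Function.Surjective (sumOutputs K O E) := by
  classical
  exact fun e ↦ ⟨Pi.single (Classical.arbitrary O) e, by simp⟩

/-- Putting the common marginal on a fixed output `o₀` leaves, for every input, a family of
outputs summing to zero. -/
def constMarginalEquiv [DecidableEq O] (i₀ : I) (o₀ : O) :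
    constMarginal K I O E ≃ₗ[K] E × (I → (sumOutputs K O E).ker) where
  toFun w := (∑ o, w.1 i₀ o, fun i ↦ ⟨w.1 i - Pi.single o₀ (∑ o, w.1 i₀ o), by
    simp [w.2 i i₀]⟩)
  invFun v := ⟨fun i ↦ (v.2 i).1 + Pi.single o₀ v.1, fun i i' ↦ by
    simp [Finset.sum_add_distrib, sum_coe_ker_sumOutputs]⟩
  map_add' v w := by
    ext
    · simp [Finset.sum_add_distrib]
    · simp only [Submodule.coe_add, Pi.add_apply, Finset.sum_add_distrib, Pi.single_add,
        Pi.sub_apply, Prod.snd_add]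
      abel
  map_smul' r w := by
    ext <;> simp [← Finset.smul_sum, Pi.single_smul, smul_sub]
  left_inv w := by
    ext; simp
  right_inv v := by
    ext <;> simp [Finset.sum_add_distrib, sum_coe_ker_sumOutputs]

end Ring

variable [DivisionRing K] [AddCommGroup E] [Module K E] [FiniteDimensional K E]

theorem finrank_ker_sumOutputs [Nonempty O] :
    finrank K (sumOutputs K O E).ker = (Fintype.card O - 1) * finrank K E := by
  have h := (sumOutputs K O E).finrank_range_add_finrank_ker
  rw [LinearMap.range_eq_top.2 sumOutputs_surjective, finrank_top, finrank_pi_fintype,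
    Finset.sum_const, Finset.card_univ, smul_eq_mul] at h
  rw [Nat.sub_one_mul, ← h, Nat.add_sub_cancel_left]

theorem finrank_constMarginal [Fintype I] [Nonempty I] [Nonempty O] :
    finrank K (constMarginal K I O E) =
      (Fintype.card I * (Fintype.card O - 1) + 1) * finrank K E := by
  classical
  rw [(constMarginalEquiv (Classical.arbitrary I) (Classical.arbitrary O)).finrank_eq,
    finrank_prod, finrank_pi_fintype, Finset.sum_const, Finset.card_univ, smul_eq_mul,
    finrank_ker_sumOutputs]
  ring

end OneParty

section ThreeParties

variable (K A B C X Y Z : Type*) [Fintype X] [Fintype Y] [Fintype Z]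

section Ring

variable [Ring K]

/-- The solution space of the three-party no-signalling equations, with inputs in `A`, `B`, `C` and
outputs in `X`, `Y`, `Z`; neither positivity nor normalisation is imposed. -/
def noSignallingSpace : Submodule K (A × B × C → X × Y × Z → K) where
  carrier := {p |
    (∀ a a' b c y z, ∑ x, p (a, b, c) (x, y, z) = ∑ x, p (a', b, c) (x, y, z)) ∧
    (∀ a b b' c x z, ∑ y, p (a, b, c) (x, y, z) = ∑ y, p (a, b', c) (x, y, z)) ∧
    (∀ a b c c' x y, ∑ z, p (a, b, c) (x, y, z) = ∑ z, p (a, b, c') (x, y, z))}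
  zero_mem' := by simp
  add_mem' := by
    rintro p q ⟨hpA, hpB, hpC⟩ ⟨hqA, hqB, hqC⟩
    simp only [Set.mem_ofPred_eq, Pi.add_apply, Finset.sum_add_distrib]
    exact ⟨fun a a' b c y z ↦ congrArg₂ _ (hpA a a' b c y z) (hqA a a' b c y z),
      fun a b b' c x z ↦ congrArg₂ _ (hpB a b b' c x z) (hqB a b b' c x z),
      fun a b c c' x y ↦ congrArg₂ _ (hpC a b c c' x y) (hqC a b c c' x y)⟩
  smul_mem' := by
    rintro r p ⟨hpA, hpB, hpC⟩
    simp only [Set.mem_ofPred_eq, Pi.smul_apply, ← Finset.smul_sum]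
    exact ⟨fun a a' b c y z ↦ congrArg _ (hpA a a' b c y z),
      fun a b b' c x z ↦ congrArg _ (hpB a b b' c x z),
      fun a b c c' x y ↦ congrArg _ (hpC a b c c' x y)⟩

/-- Currying exhibits the three-party no-signalling space as a threefold iteration of the one-party
space. -/
def noSignallingSpaceEquiv :
    noSignallingSpace K A B C X Y Z ≃ₗ[K]
      constMarginal K A X (constMarginal K B Y (constMarginal K C Z K)) where
  toFun p :=
    ⟨fun a x ↦ ⟨fun b y ↦ ⟨fun c z ↦ p.1 (a, b, c) (x, y, z),
      fun c c' ↦ p.2.2.2 a b c c' x y⟩,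
      fun b b' ↦ by ext c z; simpa using p.2.2.1 a b b' c x z⟩,
      fun a a' ↦ by ext b y c z; simpa using p.2.1 a a' b c y z⟩
  invFun w :=
    ⟨fun i o ↦ ((w.1 i.1 o.1).1 i.2.1 o.2.1).1 i.2.2 o.2.2,
      fun a a' b c y z ↦ by
        simpa using congrArg (fun v ↦ (v.1 b y).1 c z) (w.2 a a'),
      fun a b b' c x z ↦ by
        simpa using congrArg (fun v ↦ v.1 c z) ((w.1 a x).2 b b'),
      fun a b c c' x y ↦ ((w.1 a x).1 b y).2 c c'⟩
  map_add' _ _ := rfl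
  map_smul' _ _ := rfl
  left_inv _ := rfl
  right_inv _ := rfl

variable {K A B C X Y Z}

theorem sum_eq_sum_of_mem_noSignallingSpace {p : A × B × C → X × Y × Z → K}
    (hp : p ∈ noSignallingSpace K A B C X Y Z) (i j : A × B × C) : ∑ o, p i o = ∑ o, p j o := by
  obtain ⟨hA, hB, hC⟩ := hp
  obtain ⟨a, b, c⟩ := i
  obtain ⟨a', b', c'⟩ := j
  calc ∑ o, p (a, b, c) o
    _ = ∑ o, p (a', b, c) o := by
      simp only [Fintype.sum_prod_type_right, hA a a']
    _ = ∑ o, p (a', b', c) o := by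
      rw [Fintype.sum_prod_type, Fintype.sum_prod_type]
      exact Fintype.sum_congr _ _ fun x ↦ by
        simp only [Fintype.sum_prod_type_right, hB a' b b']
    _ = ∑ o, p (a', b', c') o := by
      simp only [Fintype.sum_prod_type, hC a' b' c c']

end Ring

theorem finrank_noSignallingSpace [DivisionRing K] [Fintype A] [Fintype B] [Fintype C]
    [Nonempty A] [Nonempty B] [Nonempty C] [Nonempty X] [Nonempty Y] [Nonempty Z] :
    finrank K (noSignallingSpace K A B C X Y Z) =
      (Fintype.card A * (Fintype.card X - 1) + 1) * (Fintype.card B * (Fintype.card Y - 1) + 1) *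
        (Fintype.card C * (Fintype.card Z - 1) + 1) := by
  rw [(noSignallingSpaceEquiv K A B C X Y Z).finrank_eq]
  simp only [finrank_constMarginal, finrank_self, mul_one, mul_assoc]

end ThreeParties

section Models

/-- The model with inputs in `I` and outputs in `O` in which, whatever the input, all outputs are
equally likely. -/
noncomputable def uniformModel (I O : Type*) [Fintype O] : I → O → ℝ :=
  fun _ _ ↦ (Fintype.card O : ℝ)⁻¹

variable {I O : Type*} [Fintype O]

/-- The total mass of a (possibly signed or unnormalised) model at a given input. -/
def totalMass (i : I) : (I → O → ℝ) →ₗ[ℝ] ℝ :=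
  sumOutputs ℝ O ℝ ∘ₗ LinearMap.proj i

@[simp]
theorem totalMass_apply (i : I) (p : I → O → ℝ) : totalMass i p = ∑ o, p i o :=
  sumOutputs_apply _

theorem sum_uniformModel [Nonempty O] (i : I) : ∑ o, uniformModel I O i o = 1 := by
  simp [uniformModel]

theorem nonneg_mem_nhds_uniformModel [Nonempty O] [Finite I] :
    {p | ∀ i o, 0 ≤ p i o} ∈ 𝓝 (uniformModel I O) := by
  have hpos (i : I) (o : O) : 0 < uniformModel I O i o :=
    inv_pos.2 (Nat.cast_pos.2 Fintype.card_pos)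
  refine Filter.eventually_all.2 fun i ↦ Filter.eventually_all.2 fun o ↦ ?_
  exact (continuous_apply_apply i o).continuousAt.eventually_mem (Ici_mem_nhds (hpos i o))

end Models

section Polytope

variable (A B C X Y Z : Type*) [Fintype X] [Fintype Y] [Fintype Z]

/-- The no-signalling polytope on three parties with inputs in `A`, `B`, `C` and outputs in `X`,
`Y`, `Z`. -/
def noSignallingPolytope : Set (A × B × C → X × Y × Z → ℝ) :=
  {p | (∀ i o, 0 ≤ p i o) ∧ (∀ i, ∑ o, p i o = 1) ∧ p ∈ noSignallingSpace ℝ A B C X Y Z}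

variable {A B C X Y Z}

theorem uniformModel_mem_noSignallingSpace :
    uniformModel (A × B × C) (X × Y × Z) ∈ noSignallingSpace ℝ A B C X Y Z :=
  ⟨fun _ _ _ _ _ _ ↦ rfl, fun _ _ _ _ _ _ ↦ rfl, fun _ _ _ _ _ _ ↦ rfl⟩

variable [Nonempty X] [Nonempty Y] [Nonempty Z]

theorem noSignallingPolytope_eq_inter (i₀ : A × B × C) :
    noSignallingPolytope A B C X Y Z =
      (AffineSubspace.mk' (uniformModel (A × B × C) (X × Y × Z))
        (noSignallingSpace ℝ A B C X Y Z ⊓ (totalMass i₀).ker) : Set _) ∩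
        {p | ∀ i o, 0 ≤ p i o} := by
  ext p
  have hmass : totalMass i₀ (p - uniformModel (A × B × C) (X × Y × Z)) = 0 ↔ ∑ o, p i₀ o = 1 := by
    rw [map_sub, totalMass_apply, totalMass_apply, sum_uniformModel, sub_eq_zero]
  simp only [noSignallingPolytope, Set.mem_inter_iff, Set.mem_ofPred_eq, SetLike.mem_coe,
    AffineSubspace.mem_mk', vsub_eq_sub, Submodule.mem_inf, LinearMap.mem_ker, hmass,
    Submodule.sub_mem_iff_left _ uniformModel_mem_noSignallingSpace]
  constructor
  · rintro ⟨hnonneg, hnorm, hp⟩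
    exact ⟨⟨hp, hnorm i₀⟩, hnonneg⟩
  · rintro ⟨⟨hp, hnorm⟩, hnonneg⟩
    exact ⟨hnonneg, fun i ↦ (sum_eq_sum_of_mem_noSignallingSpace hp i i₀).trans hnorm, hp⟩

theorem vectorSpan_noSignallingPolytope [Finite A] [Finite B] [Finite C] (i₀ : A × B × C) :
    vectorSpan ℝ (noSignallingPolytope A B C X Y Z) =
      noSignallingSpace ℝ A B C X Y Z ⊓ (totalMass i₀).ker := by
  rw [noSignallingPolytope_eq_inter i₀, vectorSpan_inter_eq_direction_of_mem_nhds
    (AffineSubspace.self_mem_mk' _ _) nonneg_mem_nhds_uniformModel, AffineSubspace.direction_mk']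

end Polytope

theorem noSignalling3_eq_noSignallingPolytope :
    noSignalling3 = noSignallingPolytope Bool Bool Bool Bool Bool Bool :=
  rfl

theorem noSignalling3_affineDim_general (A B C X Y Z : Type*) [Fintype A] [Fintype B] [Fintype C]
    [Fintype X] [Fintype Y] [Fintype Z] [Nonempty A] [Nonempty B] [Nonempty C] [Nonempty X]
    [Nonempty Y] [Nonempty Z] :
    finrank ℝ (vectorSpan ℝ (noSignallingPolytope A B C X Y Z)) + 1 =
      (Fintype.card A * (Fintype.card X - 1) + 1) * (Fintype.card B * (Fintype.card Y - 1) + 1) *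
        (Fintype.card C * (Fintype.card Z - 1) + 1) := by
  let i₀ : A × B × C := Classical.arbitrary _
  have hmass : totalMass i₀ (uniformModel (A × B × C) (X × Y × Z)) ≠ 0 := by
    rw [totalMass_apply, sum_uniformModel]
    exact one_ne_zero
  rw [vectorSpan_noSignallingPolytope i₀,
    finrank_inf_ker_add_one uniformModel_mem_noSignallingSpace hmass, finrank_noSignallingSpace]

/-- The no-signalling polytope on three parties with binary inputs and
outputs has affine dimension 26. -/
theorem noSignalling3_affineDim :
    Module.finrank ℝ (vectorSpan ℝ noSignalling3) = 26 := by
  rw [noSignalling3_eq_noSignallingPolytope]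
  simpa using noSignalling3_affineDim_general Bool Bool Bool Bool Bool Bool
end

section
/- Let p be the causal-fork empirical model given by the explicit table in the context. Then: (1) p satisfies the causality equations of the order A ∨ (C⇝B) (for each down-closed event set T ∈ {{A},{C},{A,C},{B,C}}, the marginal of p obtained by summing over the outputs of the events outside T depends only on the inputs of the events in T); (2) p likewise satisfies the causality equations of the order B ∨ (C⇝A) (down-closed sets T ∈ {{B},{C},{B,C},{A,C}}); and yet (3) the no-signalling fraction of p is zero: the only function v : ({0,1}³) → ({0,1}³ → ℝ) with 0 ≤ v i o ≤ p i o for all i, o, with all row sums ∑_o v i o equal across inputs i, and satisfying the no-signalling equations, is v = 0. In particular p lies in the intersection of the two causaltopes but not in the no-signalling polytope, so the intersection of two causaltopes need not be the causaltope of the meet of the underlying spaces. -/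
/-- The causal-fork empirical model: inputs `(i_A, i_B, i_C)`, outputs `(o_A, o_B, o_C)`.
Row 000 is supported on outputs with `o_A = o_B` (weight 1/4 each), row 001 on outputs
with `o_A ≠ o_B`, rows 110 and 111 on outputs of even parity `o_A ⊕ o_B ⊕ o_C = 0`,
and rows 010, 011, 100, 101 are uniform (all entries 1/8). -/
noncomputable def causalFork : Bool × Bool × Bool → Bool × Bool × Bool → ℝ := fun i o =>
  match i, o with
  | (false, false, false), (x, y, _) => if x = y then 1/4 else 0
  | (false, false, true), (x, y, _) => if x = y then 0 else 1/4
  | (false, true, _), _ => 1/8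
  | (true, false, _), _ => 1/8
  | (true, true, _), (x, y, z) => if xor x (xor y z) = false then 1/4 else 0

/-!
Every marginal of the causal fork onto `{A, C}` and onto `{B, C}` is uniform, whatever the inputs,
so none of the causality equations can fail. On the other hand, at `i_A = i_B = 0` the
`{A, B}`-marginal is supported on `o_A = o_B` when `i_C = 0` and on `o_A ≠ o_B` when `i_C = 1`. A
dominated `v` in which `C` does not signal has the same `{A, B}`-marginal for both values of `i_C`,
hence vanishes there; since its total mass is the same in every row, it vanishes everywhere.
-/

section Models

variable {I IA IB IC OA OB OC M : Type*} [Fintype OC]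

/-- The causality equations of the order `A ∨ (C ⇝ B)`, one conjunct for each of the proper nonempty
down-closed sets `{A}`, `{C}`, `{A, C}`, `{B, C}`. Parties are always listed in the order `A`, `B`,
`C`. -/
def SatisfiesAOrCToB [Fintype OA] [Fintype OB] [AddCommMonoid M]
    (p : IA × IB × IC → OA × OB × OC → M) : Prop :=
  (∀ a b c b' c' x, ∑ y, ∑ z, p (a, b, c) (x, y, z) = ∑ y, ∑ z, p (a, b', c') (x, y, z)) ∧
  (∀ a b a' b' c z, ∑ x, ∑ y, p (a, b, c) (x, y, z) = ∑ x, ∑ y, p (a', b', c) (x, y, z)) ∧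
  (∀ a b b' c x z, ∑ y, p (a, b, c) (x, y, z) = ∑ y, p (a, b', c) (x, y, z)) ∧
  (∀ a a' b c y z, ∑ x, p (a, b, c) (x, y, z) = ∑ x, p (a', b, c) (x, y, z))

/-- The causality equations of the order `B ∨ (C ⇝ A)`, one conjunct for each of the proper nonempty
down-closed sets `{B}`, `{C}`, `{B, C}`, `{A, C}`. -/
def SatisfiesBOrCToA [Fintype OA] [Fintype OB] [AddCommMonoid M]
    (p : IA × IB × IC → OA × OB × OC → M) : Prop :=
  (∀ a b c a' c' y, ∑ x, ∑ z, p (a, b, c) (x, y, z) = ∑ x, ∑ z, p (a', b, c') (x, y, z)) ∧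
  (∀ a b a' b' c z, ∑ x, ∑ y, p (a, b, c) (x, y, z) = ∑ x, ∑ y, p (a', b', c) (x, y, z)) ∧
  (∀ a a' b c y z, ∑ x, p (a, b, c) (x, y, z) = ∑ x, p (a', b, c) (x, y, z)) ∧
  (∀ a b b' c x z, ∑ y, p (a, b, c) (x, y, z) = ∑ y, p (a, b', c) (x, y, z))

section ConstantMarginals

variable [Fintype OA] [Fintype OB] [AddCommMonoid M] {p : IA × IB × IC → OA × OB × OC → M}

theorem satisfiesAOrCToB_of_marginals_const
    (hAC : ∀ i i' x z, ∑ y, p i (x, y, z) = ∑ y, p i' (x, y, z))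
    (hBC : ∀ i i' y z, ∑ x, p i (x, y, z) = ∑ x, p i' (x, y, z)) :
    SatisfiesAOrCToB p := by
  refine ⟨fun a b c b' c' x => ?_, fun a b a' b' c z => ?_, fun _ _ _ _ => hAC _ _,
    fun _ _ _ _ => hBC _ _⟩
  · calc ∑ y, ∑ z, p (a, b, c) (x, y, z)
        = ∑ z, ∑ y, p (a, b, c) (x, y, z) := Finset.sum_comm
      _ = ∑ z, ∑ y, p (a, b', c') (x, y, z) := Fintype.sum_congr _ _ fun z => hAC _ _ x z
      _ = ∑ y, ∑ z, p (a, b', c') (x, y, z) := Finset.sum_comm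
  · exact Fintype.sum_congr _ _ fun x => hAC _ _ x z

theorem satisfiesBOrCToA_of_marginals_const
    (hAC : ∀ i i' x z, ∑ y, p i (x, y, z) = ∑ y, p i' (x, y, z))
    (hBC : ∀ i i' y z, ∑ x, p i (x, y, z) = ∑ x, p i' (x, y, z)) :
    SatisfiesBOrCToA p := by
  refine ⟨fun a b c a' c' y => ?_, fun a b a' b' c z => ?_, fun _ _ _ _ => hBC _ _,
    fun _ _ _ _ => hAC _ _⟩
  · calc ∑ x, ∑ z, p (a, b, c) (x, y, z)
        = ∑ z, ∑ x, p (a, b, c) (x, y, z) := Finset.sum_comm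
      _ = ∑ z, ∑ x, p (a', b, c') (x, y, z) := Fintype.sum_congr _ _ fun z => hBC _ _ y z
      _ = ∑ x, ∑ z, p (a', b, c') (x, y, z) := Finset.sum_comm
  · exact Fintype.sum_congr _ _ fun x => hAC _ _ x z

end ConstantMarginals

variable [AddCommMonoid M] [PartialOrder M] [IsOrderedAddMonoid M]

theorem eq_zero_of_disjoint_marginals {v v' : OA × OB × OC → M} (hv : ∀ o, 0 ≤ v o)
    (hmarginal : ∀ x y, ∑ z, v (x, y, z) = ∑ z, v' (x, y, z))
    (hdisjoint : ∀ x y, (∀ z, v (x, y, z) = 0) ∨ ∀ z, v' (x, y, z) = 0) :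
    v = 0 := by
  funext ⟨x, y, z⟩
  rcases hdisjoint x y with h | h'
  · exact h z
  · have hsum : ∑ z, v (x, y, z) = 0 := (hmarginal x y).trans (Fintype.sum_eq_zero _ h')
    exact congrFun ((Fintype.sum_eq_zero_iff_of_nonneg fun z => hv (x, y, z)).1 hsum) z

theorem eq_zero_of_row_eq_zero {O : Type*} [Fintype O] {v : I → O → M} {i : I}
    (hv : ∀ j o, 0 ≤ v j o) (hmass : ∀ j j', ∑ o, v j o = ∑ o, v j' o) (hi : v i = 0) :
    v = 0 := by
  funext j
  have hsum : ∑ o, v j o = 0 := (hmass j i).trans (Fintype.sum_eq_zero _ (congrFun hi))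
  exact (Fintype.sum_eq_zero_iff_of_nonneg (hv j)).1 hsum

end Models

theorem causalFork_swap (a b c x y z : Bool) :
    causalFork (b, a, c) (y, x, z) = causalFork (a, b, c) (x, y, z) := by
  cases a <;> cases b <;> cases c <;> simp [causalFork, eq_comm (a := y), Bool.xor_left_comm]

theorem sum_outputA_causalFork (i : Bool × Bool × Bool) (y z : Bool) :
    ∑ x, causalFork i (x, y, z) = 1 / 4 := by
  obtain ⟨a, b, c⟩ := i
  cases a <;> cases b <;> cases c <;> cases y <;> cases z <;> norm_num [causalFork]

theorem sum_outputB_causalFork (i : Bool × Bool × Bool) (x z : Bool) :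
    ∑ y, causalFork i (x, y, z) = 1 / 4 := by
  obtain ⟨a, b, c⟩ := i
  simpa only [causalFork_swap] using sum_outputA_causalFork (b, a, c) x z

theorem causalFork_disjoint_marginals (x y : Bool) :
    (∀ z, causalFork (false, false, false) (x, y, z) = 0) ∨
      ∀ z, causalFork (false, false, true) (x, y, z) = 0 := by
  rcases eq_or_ne x y with hxy | hxy
  · exact .inr fun _ => if_pos hxy
  · exact .inl fun _ => if_neg hxy

theorem causalFork_in_two_causaltopes_but_nosignalling_fraction_zero_general :
    SatisfiesAOrCToB causalFork ∧ SatisfiesBOrCToA causalFork ∧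
      ∀ v : Bool × Bool × Bool → Bool × Bool × Bool → ℝ,
        (∀ i o, 0 ≤ v i o ∧ v i o ≤ causalFork i o) →
        (∀ i i', ∑ o, v i o = ∑ o, v i' o) →
        (∀ x y, ∑ z, v (false, false, false) (x, y, z) = ∑ z, v (false, false, true) (x, y, z)) →
        v = 0 := by
  have hAC (i i' : Bool × Bool × Bool) (x z : Bool) :
      ∑ y, causalFork i (x, y, z) = ∑ y, causalFork i' (x, y, z) := by
    rw [sum_outputB_causalFork, sum_outputB_causalFork]
  have hBC (i i' : Bool × Bool × Bool) (y z : Bool) :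
      ∑ x, causalFork i (x, y, z) = ∑ x, causalFork i' (x, y, z) := by
    rw [sum_outputA_causalFork, sum_outputA_causalFork]
  refine ⟨satisfiesAOrCToB_of_marginals_const hAC hBC,
    satisfiesBOrCToA_of_marginals_const hAC hBC, fun v hv hmass hmarginal => ?_⟩
  have eq_zero_of_causalFork {i o} (h : causalFork i o = 0) : v i o = 0 :=
    le_antisymm ((hv i o).2.trans_eq h) (hv i o).1
  have hrow : v (false, false, false) = 0 :=
    eq_zero_of_disjoint_marginals (fun o => (hv _ o).1) hmarginal fun x y =>
      (causalFork_disjoint_marginals x y).imp (fun h z => eq_zero_of_causalFork (h z))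
        (fun h z => eq_zero_of_causalFork (h z))
  exact eq_zero_of_row_eq_zero (fun i o => (hv i o).1) hmass hrow

/-- The causal-fork model (1) satisfies the causality equations of the
order `A ∨ (C ⇝ B)` (marginal constraints for the lowersets `{A}`, `{C}`, `{A,C}`,
`{B,C}`), (2) satisfies the causality equations of the order `B ∨ (C ⇝ A)` (lowersets
`{B}`, `{C}`, `{B,C}`, `{A,C}`), and yet (3) has no-signalling fraction zero: the only
componentwise-dominated, quasi-normalised, no-signalling `v ≤ p` is `v = 0`.  Hence the
intersection of the two causaltopes is not the causaltope of the meet of the spaces. -/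
theorem causalFork_in_two_causaltopes_but_nosignalling_fraction_zero :
    -- (1) causality equations of A ∨ (C ⇝ B)
    ((∀ iA iB iC iB' iC' oA : Bool,
        ∑ oB : Bool, ∑ oC : Bool, causalFork (iA, iB, iC) (oA, oB, oC)
          = ∑ oB : Bool, ∑ oC : Bool, causalFork (iA, iB', iC') (oA, oB, oC)) ∧
      (∀ iA iB iA' iB' iC oC : Bool,
        ∑ oA : Bool, ∑ oB : Bool, causalFork (iA, iB, iC) (oA, oB, oC)
          = ∑ oA : Bool, ∑ oB : Bool, causalFork (iA', iB', iC) (oA, oB, oC)) ∧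
      (∀ iA iB iB' iC oA oC : Bool,
        ∑ oB : Bool, causalFork (iA, iB, iC) (oA, oB, oC)
          = ∑ oB : Bool, causalFork (iA, iB', iC) (oA, oB, oC)) ∧
      (∀ iA iA' iB iC oB oC : Bool,
        ∑ oA : Bool, causalFork (iA, iB, iC) (oA, oB, oC)
          = ∑ oA : Bool, causalFork (iA', iB, iC) (oA, oB, oC))) ∧
    -- (2) causality equations of B ∨ (C ⇝ A)
    ((∀ iA iB iC iA' iC' oB : Bool,
        ∑ oA : Bool, ∑ oC : Bool, causalFork (iA, iB, iC) (oA, oB, oC)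
          = ∑ oA : Bool, ∑ oC : Bool, causalFork (iA', iB, iC') (oA, oB, oC)) ∧
      (∀ iA iB iA' iB' iC oC : Bool,
        ∑ oA : Bool, ∑ oB : Bool, causalFork (iA, iB, iC) (oA, oB, oC)
          = ∑ oA : Bool, ∑ oB : Bool, causalFork (iA', iB', iC) (oA, oB, oC)) ∧
      (∀ iA iA' iB iC oB oC : Bool,
        ∑ oA : Bool, causalFork (iA, iB, iC) (oA, oB, oC)
          = ∑ oA : Bool, causalFork (iA', iB, iC) (oA, oB, oC)) ∧
      (∀ iA iB iB' iC oA oC : Bool,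
        ∑ oB : Bool, causalFork (iA, iB, iC) (oA, oB, oC)
          = ∑ oB : Bool, causalFork (iA, iB', iC) (oA, oB, oC))) ∧
    -- (3) no-signalling fraction zero
    (∀ v : Bool × Bool × Bool → Bool × Bool × Bool → ℝ,
      (∀ i o, 0 ≤ v i o ∧ v i o ≤ causalFork i o) →
      (∀ i i' : Bool × Bool × Bool,
        ∑ o : Bool × Bool × Bool, v i o = ∑ o : Bool × Bool × Bool, v i' o) →
      (∀ a a' b c y z : Bool,
        ∑ x : Bool, v (a, b, c) (x, y, z) = ∑ x : Bool, v (a', b, c) (x, y, z)) →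
      (∀ a b b' c x z : Bool,
        ∑ y : Bool, v (a, b, c) (x, y, z) = ∑ y : Bool, v (a, b', c) (x, y, z)) →
      (∀ a b c c' x y : Bool,
        ∑ z : Bool, v (a, b, c) (x, y, z) = ∑ z : Bool, v (a, b, c') (x, y, z)) →
      v = 0) := by
  obtain ⟨hAOrCToB, hBOrCToA, hzero⟩ :=
    causalFork_in_two_causaltopes_but_nosignalling_fraction_zero_general
  exact ⟨hAOrCToB, hBOrCToA, fun v hv hmass _ _ hC => hzero v hv hmass (hC false false false true)⟩
end

section
/- Let p be the BFW empirical model given by the explicit table in the context. Then: (1) for each party P ∈ {A,B,C}, the single-party output marginal ∑_{other two outputs} p i o depends only on i_P (indeed it equals 1/2 for each value of o_P), so p lies in the causaltope of each of the three indefinite causal orders in which one fixed party acts first and the other two remain in indiscrete order; and yet (2) for every permutation (P₁,P₂,P₃) of the three parties, the only function v : ({0,1}³) → ({0,1}³ → ℝ) with 0 ≤ v i o ≤ p i o for all i,o, with all row sums ∑_o v i o equal across inputs i, and satisfying the causality equations of the total order P₁ ≺ P₂ ≺ P₃ (the marginal of o_{P₁} depends only on i_{P₁}, and the joint marginal of (o_{P₁},o_{P₂})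 depends only on (i_{P₁},i_{P₂})), is v = 0. Hence p has causal fraction zero over every total causal order on the three parties. -/
/-- The BFW empirical model on three parties indexed by `Fin 3` (A = 0, B = 1, C = 2),
with binary inputs and outputs: the 50%-50% mixture of the circular "identity" process
`o_P = i_{P-1}` (i.e. `o k = i (k+2)`) and the circular "bitflip" process
`o k = ¬ i (k+2)`.  Explicitly, each input row assigns probability 1/2 to each of two
output triples: 000 : {000, 111}; 001 : {011, 100}; 010 : {001, 110}; 011 : {010, 101};
100 : {010, 101}; 101 : {001, 110}; 110 : {011, 100}; 111 : {000, 111}. -/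
noncomputable def bfw : (Fin 3 → Bool) → (Fin 3 → Bool) → ℝ := fun i o =>
  if o = (fun k => i (k + 2)) ∨ o = (fun k => !(i (k + 2))) then 1/2 else 0

/-!
On the support of the BFW model, the exclusive or of two outputs equals the exclusive or of the two
inputs routed to them.  Of the first two parties in a total order exactly one receives the input of
the last party, so flipping that input flips this parity: no joint output of the first two parties
is possible both before and after the flip.  As their joint marginal cannot depend on the last
input, it vanishes, and by nonnegativity so does each of its terms.
-/

open Function

theorem eq_zero_of_sum_ite_eq_sum_ite {α M : Type*} [Fintype α] [AddCommMonoid M] [PartialOrder M]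
    [IsOrderedAddMonoid M] {q : α → Prop} [DecidablePred q] {f g : α → M} (hf : ∀ x, 0 ≤ f x)
    (hg : ∀ x, q x → g x = 0)
    (h : ∑ x, (if q x then f x else 0) = ∑ x, (if q x then g x else 0)) {x : α} (hx : q x) :
    f x = 0 := by
  have sum_g : ∑ x, (if q x then g x else 0) = 0 :=
    Finset.sum_eq_zero fun y _ => ite_eq_right_iff.mpr (hg y)
  have ite_nonneg : ∀ y ∈ Finset.univ, 0 ≤ if q y then f y else 0 := fun y _ => by
    split_ifs
    exacts [hf y, le_rfl]
  simpa [hx] using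
    (Finset.sum_eq_zero_iff_of_nonneg ite_nonneg).mp (h.trans sum_g) x (Finset.mem_univ x)

theorem xor_update_not {κ : Type*} [DecidableEq κ] (i : κ → Bool) {c x y : κ}
    (h : Xor (x = c) (y = c)) :
    (update i c (!i c) x ^^ update i c (!i c) y) = !(i x ^^ i y) := by
  rcases h with ⟨rfl, hy⟩ | ⟨rfl, hx⟩
  · simp [hy]
  · simp [hx]

/-- The equal mixture of the process in which party `k` outputs the input bit `i (s k)` and the
process in which it outputs the negation of that bit.  The wiring `s` is an arbitrary map from
parties to input bits; the BFW model is the case of a cyclic shift of three parties. -/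
noncomputable def flipMixture {ι κ : Type*} [Fintype ι] (s : ι → κ) (i : κ → Bool)
    (o : ι → Bool) : ℝ :=
  if o = (fun k => i (s k)) ∨ o = (fun k => !(i (s k))) then 1 / 2 else 0

section flipMixture

variable {ι κ : Type*} [Fintype ι] {s : ι → κ} {i : κ → Bool} {o o' : ι → Bool}

theorem xor_eq_xor_of_flipMixture_ne_zero (h : flipMixture s i o ≠ 0) (a b : ι) :
    (o a ^^ o b) = (i (s a) ^^ i (s b)) := by
  rcases (ite_ne_right_iff.mp h).1 with rfl | rfl
  · rfl
  · exact Bool.not_bne_not _ _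

theorem flipMixture_update_not_eq_zero [DecidableEq κ] {a b : ι} {c : κ}
    (hc : Xor (s a = c) (s b = c)) (h : flipMixture s i o ≠ 0) (ha : o' a = o a)
    (hb : o' b = o b) : flipMixture s (update i c (!i c)) o' = 0 := by
  by_contra h'
  have parity := xor_eq_xor_of_flipMixture_ne_zero h' a b
  rw [xor_update_not i hc, ← xor_eq_xor_of_flipMixture_ne_zero h a b, ha, hb] at parity
  exact (Bool.eq_not_self _).mp parity

theorem ite_flipMixture_eq_ite (a : ι) (b : Bool) :
    (if o a = b then flipMixture s i o else 0) =
      if o = (fun k => b ^^ i (s a) ^^ i (s k)) then 1 / 2 else 0 := by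
  rw [flipMixture, ← ite_and]
  refine if_congr ⟨?_, ?_⟩ rfl rfl
  · rintro ⟨rfl, rfl | rfl⟩ <;> funext k <;> simp
  · rintro rfl
    cases b <;> cases hi : i (s a) <;> simp [hi]

end flipMixture

theorem bfw_maximally_causally_inseparable_general {ι κ M : Type*} [Fintype ι]
    [DecidableEq ι] [AddCommMonoid M] [PartialOrder M] [IsOrderedAddMonoid M] (s : ι → κ) :
    (∀ (i : κ → Bool) (a : ι) (b : Bool),
      ∑ o : ι → Bool, (if o a = b then flipMixture s i o else 0) = 1 / 2) ∧
    (∀ (a b : ι) (c : κ), Xor (s a = c) (s b = c) →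
      ∀ v : (κ → Bool) → (ι → Bool) → M,
      (∀ i o, 0 ≤ v i o) →
      (∀ i o, flipMixture s i o = 0 → v i o = 0) →
      (∀ i i' : κ → Bool, (∀ k, k ≠ c → i k = i' k) → ∀ b₀ b₁ : Bool,
        ∑ o : ι → Bool, (if o a = b₀ ∧ o b = b₁ then v i o else 0) =
          ∑ o : ι → Bool, (if o a = b₀ ∧ o b = b₁ then v i' o else 0)) →
      v = 0) := by
  classical
  refine ⟨fun i a b => by simp [ite_flipMixture_eq_ite], ?_⟩
  intro a b c hc v v_nonneg v_supp causal
  funext i o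
  by_cases h : flipMixture s i o = 0
  · exact v_supp i o h
  · have marginal_eq := causal i (update i c (!i c)) (fun k hk => (update_of_ne hk _ _).symm)
      (o a) (o b)
    exact eq_zero_of_sum_ite_eq_sum_ite (v_nonneg i)
      (fun o' ho' => v_supp _ o' (flipMixture_update_not_eq_zero hc h ho'.1 ho'.2)) marginal_eq
      ⟨rfl, rfl⟩

theorem xor_add_two_eq : ∀ {a b c : Fin 3}, a ≠ b → a ≠ c → b ≠ c →
    Xor (a + 2 = c) (b + 2 = c) := by
  unfold Xor
  decide

/-- (1) each single-party output marginal of the BFW model equals 1/2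
regardless of all inputs (so the BFW model lies in the causaltope of each of the three
indefinite causal orders where one fixed party acts first and the other two remain in
indiscrete order); yet (2) for every permutation `σ` of the parties, the only
componentwise-dominated, quasi-normalised `v ≤ p` satisfying the causality equations of
the total order `σ 0 ≺ σ 1 ≺ σ 2` is `v = 0`: the BFW model has causal fraction zero
over every total causal order. -/
theorem bfw_maximally_causally_inseparable :
    (∀ i : Fin 3 → Bool, ∀ P : Fin 3, ∀ b : Bool,
      ∑ o : Fin 3 → Bool, (if o P = b then bfw i o else 0) = 1/2) ∧
    (∀ σ : Equiv.Perm (Fin 3), ∀ v : (Fin 3 → Bool) → (Fin 3 → Bool) → ℝ,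
      (∀ i o, 0 ≤ v i o ∧ v i o ≤ bfw i o) →
      (∀ i i' : Fin 3 → Bool,
        ∑ o : Fin 3 → Bool, v i o = ∑ o : Fin 3 → Bool, v i' o) →
      (∀ i i' : Fin 3 → Bool, i (σ 0) = i' (σ 0) → ∀ b : Bool,
        ∑ o : Fin 3 → Bool, (if o (σ 0) = b then v i o else 0)
          = ∑ o : Fin 3 → Bool, (if o (σ 0) = b then v i' o else 0)) →
      (∀ i i' : Fin 3 → Bool, i (σ 0) = i' (σ 0) → i (σ 1) = i' (σ 1) →
        ∀ b₀ b₁ : Bool,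
        ∑ o : Fin 3 → Bool, (if o (σ 0) = b₀ ∧ o (σ 1) = b₁ then v i o else 0)
          = ∑ o : Fin 3 → Bool, (if o (σ 0) = b₀ ∧ o (σ 1) = b₁ then v i' o else 0)) →
      v = 0) := by
  obtain ⟨marginal, vanish⟩ :=
    bfw_maximally_causally_inseparable_general (M := ℝ) fun k : Fin 3 => k + 2
  refine ⟨marginal, fun σ v hv _ _ causal => ?_⟩
  have h01 : σ 0 ≠ σ 1 := σ.injective.ne (by decide)
  have h02 : σ 0 ≠ σ 2 := σ.injective.ne (by decide)
  have h12 : σ 1 ≠ σ 2 := σ.injective.ne (by decide)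
  exact vanish _ _ _ (xor_add_two_eq h01 h02 h12) v (fun i o => (hv i o).1)
    (fun i o h => ((hv i o).2.trans_eq h).antisymm (hv i o).1)
    fun i i' h => causal i i' (h _ h02) (h _ h12)
end

section
/- Guess-Your-Neighbour's-Input causal inequality: let p : ({0,1}³) → ({0,1}² → ℝ) be a bipartite conditional probability distribution with Alice's input a, Bob's inputs (b,b') and outputs (x,y), and suppose p = μ • q + (1 − μ) • r for some μ ∈ [0,1] and conditional probability distributions q, r such that q satisfies no signalling from Bob to Alice (∑_y q (a,b,b') (x,y) depends only on a, for each x) and r satisfies no signalling from Alice to Bob (∑_x r (a,b,b') (x,y) depends only on (b,b'), for each y). Then the success probability of the GYNI game, P := (1/8) · ∑_{a,b,b' ∈ {0,1}} ∑_{x,y ∈ {0,1}} p (a,b,b') (x,y) · χ(a,b,b',x,y), satisfies P ≤ 3/4, where χ(a,b,b',x,y) = 1 if (b' = 0 and y = a) or (b' = 1 and x = b), and χ = 0 otherwise. -/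
/-!
The bit `b'` decides which player guesses, so the score is the sum of Bob's and Alice's
probabilities of guessing correctly. If Alice acts first, her guess of `b` is independent of `b`,
hence for each `a` the probabilities of guessing the various `b` correctly sum to at most `1`;
Bob's guesses of `a` are only bounded by `1` each. The other order is symmetric, and since the
score is linear, a mixture of the two orders does no better than the better one.
-/

namespace GYNI

open Finset

variable {α β : Type*} [Fintype α] [Fintype β]

/-- The distribution of Alice's output `x` under a joint distribution of the outputs `(x, y)`. -/
def aliceMarginal (w : β × α → ℝ) (x : β) : ℝ := ∑ y, w (x, y)

/-- The distribution of Bob's output `y` under a joint distribution of the outputs `(x, y)`. -/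
def bobMarginal (w : β × α → ℝ) (y : α) : ℝ := ∑ x, w (x, y)

lemma aliceMarginal_mem_stdSimplex {w : β × α → ℝ} (hw : w ∈ stdSimplex ℝ (β × α)) :
    aliceMarginal w ∈ stdSimplex ℝ β :=
  ⟨fun _ ↦ sum_nonneg fun _ _ ↦ hw.1 _, (Fintype.sum_prod_type w).symm.trans hw.2⟩

lemma bobMarginal_mem_stdSimplex {w : β × α → ℝ} (hw : w ∈ stdSimplex ℝ (β × α)) :
    bobMarginal w ∈ stdSimplex ℝ α :=
  ⟨fun _ ↦ sum_nonneg fun _ _ ↦ hw.1 _, (Fintype.sum_prod_type_right w).symm.trans hw.2⟩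

lemma sum_diagonal_le_one_of_forall_eq {m : α → α → ℝ} (hm : ∀ i, m i ∈ stdSimplex ℝ α)
    (hconst : ∀ i j, m i = m j) : ∑ i, m i i ≤ 1 := by
  obtain hα | ⟨⟨i₀⟩⟩ := isEmpty_or_nonempty α
  · simp
  · calc
      ∑ i, m i i = ∑ i, m i₀ i := sum_congr rfl fun i _ ↦ congrFun (hconst i i₀) i
      _ ≤ 1 := (hm i₀).2.le

variable [DecidableEq α] [DecidableEq β]

/-- The sum, over all inputs `(a, b, b')` with `a : α` and `b : β`, of the winning probability in
the Guess-Your-Neighbour's-Input game. Each player's output ranges over the other's input alphabet;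
the success probability for uniform inputs is the score divided by `2 * |α| * |β|`. -/
def score (p : α × β × Bool → β × α → ℝ) : ℝ :=
  ∑ a : α, ∑ b : β, ∑ b' : Bool, ∑ x : β, ∑ y : α,
    p (a, b, b') (x, y) * (if (b' = false ∧ y = a) ∨ (b' = true ∧ x = b) then 1 else 0)

lemma score_eq_sum_marginals (p : α × β × Bool → β × α → ℝ) :
    score p = ∑ a, ∑ b, bobMarginal (p (a, b, false)) a +
      ∑ a, ∑ b, aliceMarginal (p (a, b, true)) b := by
  simp [score, aliceMarginal, bobMarginal, sum_add_distrib, add_comm]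

lemma score_smul_add_smul (μ ν : ℝ) (q r : α × β × Bool → β × α → ℝ) :
    score (μ • q + ν • r) = μ • score q + ν • score r := by
  simp only [score, Pi.add_apply, Pi.smul_apply, smul_eq_mul, mul_sum, ← sum_add_distrib,
    add_mul, mul_assoc]

lemma score_le_of_aliceMarginal_eq {q : α × β × Bool → β × α → ℝ}
    (hq : ∀ i, q i ∈ stdSimplex ℝ (β × α))
    (hns : ∀ a b c, aliceMarginal (q (a, b, true)) = aliceMarginal (q (a, c, true))) :
    score q ≤ Fintype.card α * Fintype.card β + Fintype.card α := by
  have hbob : ∑ a, ∑ b, bobMarginal (q (a, b, false)) a ≤ ∑ _a : α, ∑ _b : β, (1 : ℝ) :=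
    sum_le_sum fun a _ ↦ sum_le_sum fun b _ ↦
      (mem_Icc_of_mem_stdSimplex (bobMarginal_mem_stdSimplex (hq _)) a).2
  have halice : ∑ a, ∑ b, aliceMarginal (q (a, b, true)) b ≤ ∑ _a : α, (1 : ℝ) :=
    sum_le_sum fun a _ ↦ sum_diagonal_le_one_of_forall_eq
      (fun b ↦ aliceMarginal_mem_stdSimplex (hq (a, b, true))) (hns a)
  simpa [score_eq_sum_marginals] using add_le_add hbob halice

lemma score_le_of_bobMarginal_eq {r : α × β × Bool → β × α → ℝ}
    (hr : ∀ i, r i ∈ stdSimplex ℝ (β × α))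
    (hns : ∀ b a c, bobMarginal (r (a, b, false)) = bobMarginal (r (c, b, false))) :
    score r ≤ Fintype.card α * Fintype.card β + Fintype.card β := by
  have hbob : ∑ a, ∑ b, bobMarginal (r (a, b, false)) a ≤ ∑ _b : β, (1 : ℝ) := by
    rw [sum_comm]
    exact sum_le_sum fun b _ ↦ sum_diagonal_le_one_of_forall_eq
      (fun a ↦ bobMarginal_mem_stdSimplex (hr (a, b, false))) (hns b)
  have halice : ∑ a, ∑ b, aliceMarginal (r (a, b, true)) b ≤ ∑ _a : α, ∑ _b : β, (1 : ℝ) :=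
    sum_le_sum fun a _ ↦ sum_le_sum fun b _ ↦
      (mem_Icc_of_mem_stdSimplex (aliceMarginal_mem_stdSimplex (hr _)) b).2
  simpa [score_eq_sum_marginals, add_comm] using add_le_add halice hbob

end GYNI

open GYNI in
theorem gyni_causal_inequality_general {α β : Type*} [Fintype α] [Fintype β]
    [DecidableEq α] [DecidableEq β] {q r : α × β × Bool → β × α → ℝ}
    {μ ν : ℝ} (hμ : 0 ≤ μ) (hν : 0 ≤ ν) (hμν : μ + ν = 1)
    (hq : ∀ i, q i ∈ stdSimplex ℝ (β × α)) (hr : ∀ i, r i ∈ stdSimplex ℝ (β × α))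
    (hqns : ∀ a b c, aliceMarginal (q (a, b, true)) = aliceMarginal (q (a, c, true)))
    (hrns : ∀ b a c, bobMarginal (r (a, b, false)) = bobMarginal (r (c, b, false))) :
    score (μ • q + ν • r) ≤ Fintype.card α * Fintype.card β +
      max (Fintype.card α : ℝ) (Fintype.card β) := by
  rw [score_smul_add_smul]
  refine convex_Iic (𝕜 := ℝ) (β := ℝ) _ ?_ ?_ hμ hν hμν
  · exact (score_le_of_aliceMarginal_eq hq hqns).trans (by gcongr; exact le_max_left _ _)
  · exact (score_le_of_bobMarginal_eq hr hrns).trans (by gcongr; exact le_max_right _ _)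

/-- GYNI causal inequality: if the bipartite conditional probability
distribution `p` — Alice's input `a`, Bob's inputs `(b, b')`, outputs `(x, y)` — is a
convex mixture `p = μ • q + (1 - μ) • r` of a distribution `q` with no signalling from
Bob to Alice and a distribution `r` with no signalling from Alice to Bob, then the
success probability of the Guess-Your-Neighbour's-Input game is at most `3/4`. -/
theorem gyni_causal_inequality
    (p q r : Bool × Bool × Bool → Bool × Bool → ℝ) (μ : ℝ)
    (hμ0 : 0 ≤ μ) (hμ1 : μ ≤ 1)
    (hq0 : ∀ i o, 0 ≤ q i o) (hq1 : ∀ i, ∑ o : Bool × Bool, q i o = 1)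
    (hr0 : ∀ i o, 0 ≤ r i o) (hr1 : ∀ i, ∑ o : Bool × Bool, r i o = 1)
    (hp : ∀ i o, p i o = μ * q i o + (1 - μ) * r i o)
    -- `q` satisfies no signalling from Bob to Alice:
    (hqns : ∀ a b b' c c' x : Bool,
      ∑ y : Bool, q (a, b, b') (x, y) = ∑ y : Bool, q (a, c, c') (x, y))
    -- `r` satisfies no signalling from Alice to Bob:
    (hrns : ∀ a a' b b' y : Bool,
      ∑ x : Bool, r (a, b, b') (x, y) = ∑ x : Bool, r (a', b, b') (x, y)) :
    (1/8 : ℝ) * ∑ a : Bool, ∑ b : Bool, ∑ b' : Bool, ∑ x : Bool, ∑ y : Bool,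
        p (a, b, b') (x, y) *
          (if (b' = false ∧ y = a) ∨ (b' = true ∧ x = b) then 1 else 0)
      ≤ 3/4 := by
  obtain rfl : p = μ • q + (1 - μ) • r := funext₂ hp
  have hscore := gyni_causal_inequality_general hμ0 (sub_nonneg.2 hμ1) (add_sub_cancel μ 1)
    (fun i ↦ ⟨hq0 i, hq1 i⟩) (fun i ↦ ⟨hr0 i, hr1 i⟩)
    (fun a b c ↦ funext (hqns a b true c true)) (fun b a c ↦ funext (hrns a c b false))
  exact (mul_le_mul_of_nonneg_left hscore (by norm_num)).trans (by norm_num)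
end
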